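/- arXiv:1605.04100 — 3 statements merged into one kernel-verified Lean document; each statement's English description precedes it below -/
import Mathlib

section
/- Let X be a strictly convex normed linear space and let A be a nonempty bounded subset of X. If A is uniquely remotal, then the closure of A is also uniquely remotal. -/
open Filter Topology

/-- The farthest distance of `x` from the set `A`: `D(x,A) = sup_{a ∈ A} ‖x - a‖`. -/
noncomputable def farDist {X : Type*} [NormedAddCommGroup X] (x : X) (A : Set X) : ℝ :=
  sSup ((fun a => ‖x - a‖) '' A)

/-- `F(x,A) = {a ∈ A : ‖x - a‖ = D(x,A)}`, the farthest points of `A` from `x`. -/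
def farPoints {X : Type*} [NormedAddCommGroup X] (x : X) (A : Set X) : Set X :=
  {a ∈ A | ‖x - a‖ = farDist x A}

/-- `A` is remotal if `F(x,A)` is nonempty for every `x`. -/
def Remotal {X : Type*} [NormedAddCommGroup X] (A : Set X) : Prop :=
  ∀ x : X, (farPoints x A).Nonempty

/-- `A` is uniquely remotal if `F(x,A)` is a singleton for every `x`. -/
def UniquelyRemotal {X : Type*} [NormedAddCommGroup X] (A : Set X) : Prop :=
  ∀ x : X, ∃ a : X, farPoints x A = {a}

/-- A sequence in `S` is maximizing if `‖x - a n‖ → D(x,S)` for some `x ∈ X`. -/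
def MaximizingSeq {X : Type*} [NormedAddCommGroup X] (S : Set X) (a : ℕ → X) : Prop :=
  (∀ n, a n ∈ S) ∧ ∃ x : X, Tendsto (fun n => ‖x - a n‖) atTop (𝓝 (farDist x S))

/-- `S` is M-compact if every maximizing sequence in `S` has a subsequence converging in `X`. -/
def MCompact {X : Type*} [NormedAddCommGroup X] (S : Set X) : Prop :=
  ∀ a : ℕ → X, MaximizingSeq S a →
    ∃ (φ : ℕ → ℕ) (l : X), StrictMono φ ∧ Tendsto (a ∘ φ) atTop (𝓝 l)

/-- `Far(A) = {a ∈ A : a ∈ F(x,A) for some x ∈ X}`. -/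
def farSet {X : Type*} [NormedAddCommGroup X] (A : Set X) : Set X :=
  {a : X | ∃ x : X, a ∈ farPoints x A}

-- We use Mathlib's `derivedSet A = {x | AccPt x (𝓟 A)}` for the set of limit points.

/-!
Suppose `b ∈ closure A` is farthest from `x`, and let `y` lie beyond `x` on the ray from `b`
through `x`. The ball around `y` through `b` contains the ball around `x` through `b`, hence
`closure A`, and by strict convexity the two spheres meet only at `b`. So `b` is the only point of
`closure A` farthest from `y`. Since some point of `A` is farthest from `y`, that point is `b`,
and `b` already lies in `A`.
-/

section NormedGroup

variable {X : Type*} [NormedAddCommGroup X] {S : Set X} {a x : X}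

theorem mem_farPoints_iff (hS : Bornology.IsBounded S) :
    a ∈ farPoints x S ↔ a ∈ S ∧ ∀ c ∈ S, dist x c ≤ dist x a := by
  simp only [dist_eq_norm]
  refine and_congr_right fun ha => ⟨fun hax c hc => ?_, fun hmax => ?_⟩
  · have hbdd : BddAbove ((fun c => ‖x - c‖) '' S) := by
      obtain ⟨r, hr⟩ := hS.subset_closedBall x
      exact ⟨r, Set.forall_mem_image.2 fun c hc => mem_closedBall_iff_norm'.1 (hr hc)⟩
    exact hax ▸ le_csSup hbdd (Set.mem_image_of_mem _ hc)
  · have hgreatest : IsGreatest ((fun c => ‖x - c‖) '' S) ‖x - a‖ :=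
      ⟨Set.mem_image_of_mem _ ha, Set.forall_mem_image.2 hmax⟩
    exact hgreatest.csSup_eq.symm

theorem farPoints_closure_inter (hS : Bornology.IsBounded S) (x : X) :
    farPoints x (closure S) ∩ S = farPoints x S := by
  ext a
  rw [Set.mem_inter_iff, mem_farPoints_iff hS.closure, mem_farPoints_iff hS]
  refine ⟨fun ⟨⟨_, hmax⟩, ha⟩ => ⟨ha, fun c hc => hmax c (subset_closure hc)⟩,
    fun ⟨ha, hmax⟩ => ⟨⟨subset_closure ha, ?_⟩, ha⟩⟩
  have hclosed : IsClosed {c : X | dist x c ≤ dist x a} :=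
    isClosed_le (by fun_prop) continuous_const
  exact fun c hc => closure_minimal hmax hclosed hc

theorem UniquelyRemotal.remotal (hS : UniquelyRemotal S) : Remotal S := fun x => by
  obtain ⟨a, ha⟩ := hS x
  exact ha ▸ Set.singleton_nonempty a

end NormedGroup

section NormedSpace

variable {X : Type*} [NormedAddCommGroup X] [NormedSpace ℝ X] {S : Set X} {b x y : X}

theorem mem_farPoints_of_wbtw (hS : Bornology.IsBounded S) (hb : b ∈ farPoints x S)
    (h : Wbtw ℝ b x y) : b ∈ farPoints y S := by
  rw [mem_farPoints_iff hS] at hb ⊢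
  refine ⟨hb.1, fun c hc => ?_⟩
  calc dist y c ≤ dist y x + dist x c := dist_triangle y x c
    _ ≤ dist y x + dist x b := by gcongr; exact hb.2 c hc
    _ = dist y b := h.symm.dist_add_dist

variable [StrictConvexSpace ℝ X]

theorem farPoints_lineMap_eq_singleton (hS : Bornology.IsBounded S) (hb : b ∈ farPoints x S)
    {t : ℝ} (ht : 1 < t) : farPoints (AffineMap.lineMap b x t) S = {b} := by
  set y : X := AffineMap.lineMap b x t with hy
  have hbxy : Wbtw ℝ b x y := by
    simpa [hy, AffineMap.lineMap_apply] using
      wbtw_smul_vadd_smul_vadd_of_nonneg_of_le b (x - b) zero_le_one ht.le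
  have hby : b ∈ farPoints y S := mem_farPoints_of_wbtw hS hb hbxy
  refine Set.Subset.antisymm (fun a hay => ?_) (Set.singleton_subset_iff.2 hby)
  have hdist_y : dist y a = dist y b := by
    simpa only [dist_eq_norm] using hay.2.trans hby.2.symm
  have hdist_le : dist x a ≤ dist x b := ((mem_farPoints_iff hS).1 hb).2 a hay.1
  have hsplit : dist y x + dist x b = dist y b := hbxy.symm.dist_add_dist
  have htriangle : dist y a ≤ dist y x + dist x a := dist_triangle y x a
  have hdist_x : dist x a = dist x b := by linarith
  have haxy : Wbtw ℝ a x y := (dist_add_dist_eq_iff.1 (by linarith)).symm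
  have hray : SameRay ℝ (x - a) (x - b) := by
    refine haxy.sameRay_vsub.trans hbxy.sameRay_vsub.symm fun hyx => Or.inr ?_
    have hsmul : (t - 1) • (x - b) = y - x := by
      rw [hy, AffineMap.lineMap_apply_module']
      module
    exact (smul_eq_zero_iff_right (sub_pos.2 ht).ne').1 (hsmul.trans hyx)
  have hsub : x - a = x - b := hray.eq_of_norm_eq (by simpa only [dist_eq_norm] using hdist_x)
  exact sub_right_injective hsub

theorem Remotal.farPoints_closure (hS : Remotal S) (hbd : Bornology.IsBounded S) (x : X) :
    farPoints x (closure S) = farPoints x S := by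
  rw [← farPoints_closure_inter hbd, eq_comm, Set.inter_eq_left]
  intro b hb
  obtain ⟨a, ha⟩ := hS (AffineMap.lineMap b x (2 : ℝ))
  have ha_closure := (farPoints_closure_inter hbd _).superset ha
  rw [farPoints_lineMap_eq_singleton hbd.closure hb one_lt_two] at ha_closure
  obtain ⟨rfl, haS⟩ := ha_closure
  exact haS

end NormedSpace

theorem stmt_0 {X : Type*} [NormedAddCommGroup X] [NormedSpace ℝ X] [StrictConvexSpace ℝ X]
    (A : Set X) (hne : A.Nonempty) (hbd : Bornology.IsBounded A)
    (hur : UniquelyRemotal A) : UniquelyRemotal (closure A) := by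
  intro x
  rw [hur.remotal.farPoints_closure hbd x]
  exact hur x
end

section
/- Let X be a finite-dimensional strictly convex normed linear space. If A is a nonempty bounded subset of X that is uniquely remotal, then A is a singleton. -/
open Filter Topology

-- We use Mathlib's `derivedSet A = {x | AccPt x (𝓟 A)}` for the set of limit points.

/-!
Strict convexity makes up for `A` not being assumed closed: a limit point `b` of `A` that is
farthest from `x` is the only candidate for a farthest point from `2x - b`, so it belongs to `A`.
If `A` is M-compact, the farthest point therefore depends continuously on `x`.

Let `c` be a Chebyshev center of `A`, `R` the Chebyshev radius and `b` the farthest point from `c`.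
As `x` tends to `c` along the segment from `b`, its farthest point `a` tends to `b`. Since
`‖c - a‖ ≤ R ≤ ‖x - a‖` and `x` lies between `c` and `b`, convexity of the norm gives
`R ≤ ‖b - a‖`, and `‖b - a‖` tends to `0`.
-/

section FarthestPoints

variable {X : Type*} [NormedAddCommGroup X] {A : Set X}

theorem norm_sub_le_farDist (hbd : Bornology.IsBounded A) (x : X) {a : X} (ha : a ∈ A) :
    ‖x - a‖ ≤ farDist x A := by
  refine le_csSup ?_ (Set.mem_image_of_mem _ ha)
  obtain ⟨C, hC⟩ := hbd.exists_norm_le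
  refine ⟨‖x‖ + C, ?_⟩
  rintro _ ⟨b, hb, rfl⟩
  exact (norm_sub_le x b).trans (add_le_add_right (hC b hb) ‖x‖)

theorem norm_sub_le_farDist_of_mem_closure (hbd : Bornology.IsBounded A) (x : X) {a : X}
    (ha : a ∈ closure A) : ‖x - a‖ ≤ farDist x A :=
  closure_minimal (t := {a | ‖x - a‖ ≤ farDist x A})
    (fun _ hb => norm_sub_le_farDist hbd x hb)
    (isClosed_le (by fun_prop) continuous_const) ha

theorem farDist_le (hne : A.Nonempty) {x : X} {r : ℝ} (h : ∀ a ∈ A, ‖x - a‖ ≤ r) :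
    farDist x A ≤ r :=
  csSup_le (hne.image _) (Set.forall_mem_image.2 h)

theorem lipschitzWith_one_farDist (hne : A.Nonempty) (hbd : Bornology.IsBounded A) :
    LipschitzWith 1 fun x => farDist x A := by
  refine LipschitzWith.of_le_add fun x y => farDist_le hne fun a ha => ?_
  calc ‖x - a‖ ≤ ‖x - y‖ + ‖y - a‖ := norm_sub_le_norm_sub_add_norm_sub x y a
    _ ≤ farDist y A + dist x y := by
      rw [dist_eq_norm, add_comm]
      gcongr
      exact norm_sub_le_farDist hbd y ha

theorem UniquelyRemotal.remotal_s1 (hur : UniquelyRemotal A) : Remotal A := fun x => by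
  obtain ⟨a, ha⟩ := hur x
  exact ha ▸ Set.singleton_nonempty a

theorem mCompact_of_isCompact_closure (hA : IsCompact (closure A)) : MCompact A := fun _ ha => by
  obtain ⟨l, -, φ, hφ, hl⟩ := hA.tendsto_subseq fun n => subset_closure (ha.1 n)
  exact ⟨φ, l, hφ, hl⟩

theorem tendsto_norm_sub_of_mem_farPoints (hbd : Bornology.IsBounded A) {x : X} {u a : ℕ → X}
    (hu : Tendsto u atTop (𝓝 x)) (ha : ∀ n, a n ∈ farPoints (u n) A) :
    Tendsto (fun n => ‖x - a n‖) atTop (𝓝 (farDist x A)) := by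
  have hfar : Tendsto (fun n => ‖u n - a n‖) atTop (𝓝 (farDist x A)) := by
    have hcont := (lipschitzWith_one_farDist ⟨a 0, (ha 0).1⟩ hbd).continuous
    exact ((hcont.tendsto x).comp hu).congr fun n => (ha n).2.symm
  have hdist : Tendsto (fun n => ‖x - u n‖) atTop (𝓝 0) := by
    simpa only [sub_self, norm_zero] using (hu.const_sub x).norm
  refine tendsto_of_tendsto_of_dist hfar (squeeze_zero (fun _ => dist_nonneg) (fun n => ?_) hdist)
  rw [dist_comm, Real.dist_eq]
  simpa only [sub_sub_sub_cancel_right] using abs_norm_sub_norm_le (x - a n) (u n - a n)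

section StrictConvex

variable [NormedSpace ℝ X] [StrictConvexSpace ℝ X]

theorem Remotal.mem_of_mem_closure (hr : Remotal A) (hbd : Bornology.IsBounded A) {x b : X}
    (hb : b ∈ closure A) (hxb : ‖x - b‖ = farDist x A) : b ∈ A := by
  obtain ⟨a, ha, hfar⟩ := hr (x + (x - b))
  have hxa : ‖x - a‖ ≤ ‖x - b‖ := hxb ▸ norm_sub_le_farDist hbd x ha
  have hlower : ‖x - b‖ + ‖x - b‖ ≤ ‖(x - b) + (x - a)‖ := by
    calc ‖x - b‖ + ‖x - b‖ = ‖x + (x - b) - b‖ := by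
          rw [← (SameRay.refl (x - b)).norm_add]
          congr 1
          abel
      _ ≤ farDist (x + (x - b)) A := norm_sub_le_farDist_of_mem_closure hbd _ hb
      _ = ‖(x - b) + (x - a)‖ := by
          rw [← hfar]
          congr 1
          abel
  have htri := norm_add_le (x - b) (x - a)
  have heq : x - b = x - a := eq_of_norm_eq_of_norm_add_eq (by linarith) (by linarith)
  rwa [sub_right_injective heq]

theorem UniquelyRemotal.tendsto_of_mem_farPoints (hur : UniquelyRemotal A)
    (hbd : Bornology.IsBounded A) (hM : MCompact A) {x b : X} (hb : b ∈ farPoints x A)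
    {u a : ℕ → X} (hu : Tendsto u atTop (𝓝 x)) (ha : ∀ n, a n ∈ farPoints (u n) A) :
    Tendsto a atTop (𝓝 b) := by
  refine tendsto_of_subseq_tendsto fun ns hns => ?_
  have hmax := tendsto_norm_sub_of_mem_farPoints hbd (hu.comp hns) fun n => ha (ns n)
  obtain ⟨φ, l, hφ, hl⟩ := hM (a ∘ ns) ⟨fun n => (ha (ns n)).1, x, hmax⟩
  have hlA : l ∈ closure A :=
    mem_closure_of_tendsto hl (Eventually.of_forall fun n => (ha (ns (φ n))).1)
  have hxl : ‖x - l‖ = farDist x A :=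
    tendsto_nhds_unique (hl.const_sub x).norm (hmax.comp hφ.tendsto_atTop)
  have hlF : l ∈ farPoints x A := ⟨hur.remotal_s1.mem_of_mem_closure hbd hlA hxl, hxl⟩
  obtain ⟨d, hd⟩ := hur x
  have hlb : l = b := Set.subsingleton_singleton (hd ▸ hlF) (hd ▸ hb)
  exact ⟨φ, hlb ▸ hl⟩

end StrictConvex

/-- `c` is a Chebyshev center of `A`: it minimizes the farthest distance from `A`, so that
`farDist c A` is the Chebyshev radius. Centers are not required to lie in `A`. -/
def IsChebyshevCenter (c : X) (A : Set X) : Prop :=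
  ∀ x : X, farDist c A ≤ farDist x A

theorem exists_isChebyshevCenter [ProperSpace X] (hne : A.Nonempty)
    (hbd : Bornology.IsBounded A) : ∃ c : X, IsChebyshevCenter c A := by
  have hcont := (lipschitzWith_one_farDist hne hbd).continuous
  obtain ⟨a, ha⟩ := hne
  have : Nonempty X := ⟨a⟩
  refine hcont.exists_forall_le ?_
  refine tendsto_atTop_mono (fun x => ?_) (tendsto_dist_right_cocompact_atTop a)
  rw [dist_eq_norm]
  exact norm_sub_le_farDist hbd x ha

theorem IsChebyshevCenter.farDist_le_norm_sub_of_mem_openSegment [NormedSpace ℝ X]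
    (hbd : Bornology.IsBounded A) {a b c x : X} (hc : IsChebyshevCenter c A)
    (hx : x ∈ openSegment ℝ c b) (ha : a ∈ farPoints x A) : farDist c A ≤ ‖b - a‖ := by
  have hconv : ConvexOn ℝ Set.univ fun y : X => dist y a := convexOn_univ_dist a
  simp only [dist_eq_norm] at hconv
  have hxa : farDist c A ≤ ‖x - a‖ := (hc x).trans_eq ha.2.symm
  have hca : ‖c - a‖ ≤ ‖x - a‖ := (norm_sub_le_farDist hbd c ha.1).trans hxa
  exact hxa.trans (hconv.le_right_of_left_le (Set.mem_univ c) (Set.mem_univ b) hx hca)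

end FarthestPoints

theorem stmt_1_general {X : Type*} [NormedAddCommGroup X] [NormedSpace ℝ X]
    [StrictConvexSpace ℝ X] {A : Set X} (hbd : Bornology.IsBounded A) (hM : MCompact A)
    (hur : UniquelyRemotal A) {c : X} (hc : IsChebyshevCenter c A) : A = {c} := by
  obtain ⟨b, hb⟩ := hur.remotal_s1 c
  have hc_closure : c ∈ closure (openSegment ℝ c b) :=
    segment_subset_closure_openSegment (left_mem_segment ℝ c b)
  obtain ⟨u, hu, hlim⟩ := mem_closure_iff_seq_limit.1 hc_closure
  choose a ha using fun n => hur.remotal_s1 (u n)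
  have hab : Tendsto a atTop (𝓝 b) := hur.tendsto_of_mem_farPoints hbd hM hb hlim ha
  have hradius : farDist c A ≤ 0 := by
    have hdist : Tendsto (fun n => ‖b - a n‖) atTop (𝓝 0) := by
      simpa only [sub_self, norm_zero] using (hab.const_sub b).norm
    exact ge_of_tendsto' hdist fun n =>
      hc.farDist_le_norm_sub_of_mem_openSegment hbd (hu n) (ha n)
  refine Set.eq_singleton_iff_nonempty_unique_mem.2 ⟨⟨b, hb.1⟩, fun x hx => ?_⟩
  have hcx : ‖c - x‖ ≤ 0 := (norm_sub_le_farDist hbd c hx).trans hradius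
  exact (sub_eq_zero.1 (norm_le_zero_iff.1 hcx)).symm

theorem stmt_1 {X : Type*} [NormedAddCommGroup X] [NormedSpace ℝ X] [StrictConvexSpace ℝ X]
    [FiniteDimensional ℝ X]
    (A : Set X) (hne : A.Nonempty) (hbd : Bornology.IsBounded A)
    (hur : UniquelyRemotal A) : ∃ a : X, A = {a} := by
  have : ProperSpace X := FiniteDimensional.proper ℝ X
  obtain ⟨c, hc⟩ := exists_isChebyshevCenter hne hbd
  exact ⟨c, stmt_1_general hbd (mCompact_of_isCompact_closure hbd.isCompact_closure) hur hc⟩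
end

section
/- Let X be a normed linear space and let A be a nonempty bounded subset of X. If A is M-compact, then the closure of A is M-compact. -/
open Filter Topology

-- We use Mathlib's `derivedSet A = {x | AccPt x (𝓟 A)}` for the set of limit points.

/-!
Perturbing a sequence by a null sequence affects neither whether it is maximizing nor the limits
of its subsequences, and passing from a bounded set to its closure does not change farthest
distances. So a maximizing sequence in the closure of `A` may be replaced by one in `A`.
-/

theorem exists_seq_mem_tendsto_dist_zero {X : Type*} [PseudoMetricSpace X] {A : Set X}
    {a : ℕ → X} (ha : ∀ n, a n ∈ closure A) :
    ∃ b : ℕ → X, (∀ n, b n ∈ A) ∧ Tendsto (fun n => dist (a n) (b n)) atTop (𝓝 0) := by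
  have approx (n : ℕ) : ∃ b ∈ A, dist (a n) b < 1 / ((n : ℝ) + 1) :=
    Metric.mem_closure_iff.1 (ha n) _ Nat.one_div_pos_of_nat
  choose b hbA hab using approx
  exact ⟨b, hbA, squeeze_zero (fun _ => dist_nonneg) (fun n => (hab n).le)
    tendsto_one_div_add_atTop_nhds_zero_nat⟩

section FarthestDistance

variable {X : Type*} [NormedAddCommGroup X] {A S : Set X} {a b : ℕ → X}

theorem isLUB_farDist (hne : A.Nonempty) (hbd : Bornology.IsBounded A) (x : X) :
    IsLUB ((fun a => ‖x - a‖) '' A) (farDist x A) := by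
  refine isLUB_csSup (hne.image _) ?_
  obtain ⟨C, hC⟩ := hbd.exists_norm_le
  refine ⟨‖x‖ + C, ?_⟩
  rintro _ ⟨a, ha, rfl⟩
  exact norm_sub_le_of_le le_rfl (hC a ha)

theorem farDist_closure (hne : A.Nonempty) (hbd : Bornology.IsBounded A) (x : X) :
    farDist x (closure A) = farDist x A := by
  have image_closure_subset :
      (fun a => ‖x - a‖) '' closure A ⊆ closure ((fun a => ‖x - a‖) '' A) :=
    image_closure_subset_closure_image (by fun_prop)
  have isLUB_closure : IsLUB ((fun a => ‖x - a‖) '' closure A) (farDist x A) :=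
    (isLUB_iff_of_subset_of_subset_closure (Set.image_mono subset_closure)
      image_closure_subset).1 (isLUB_farDist hne hbd x)
  exact (isLUB_farDist hne.closure hbd.closure x).unique isLUB_closure

theorem MaximizingSeq.congr_dist (ha : MaximizingSeq S a) (hb : ∀ n, b n ∈ S)
    (hab : Tendsto (fun n => dist (a n) (b n)) atTop (𝓝 0)) : MaximizingSeq S b := by
  obtain ⟨-, x, hx⟩ := ha
  refine ⟨hb, x, hx.congr_dist (squeeze_zero (fun _ => dist_nonneg) (fun n => ?_) hab)⟩
  calc dist ‖x - a n‖ ‖x - b n‖ ≤ dist (x - a n) (x - b n) := by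
        simpa only [dist_eq_norm] using dist_norm_norm_le (x - a n) (x - b n)
    _ = dist (a n) (b n) := dist_sub_left x (a n) (b n)

theorem MaximizingSeq.of_closure (hbd : Bornology.IsBounded A)
    (ha : MaximizingSeq (closure A) a) (haA : ∀ n, a n ∈ A) : MaximizingSeq A a := by
  obtain ⟨-, x, hx⟩ := ha
  exact ⟨haA, x, farDist_closure ⟨a 0, haA 0⟩ hbd x ▸ hx⟩

end FarthestDistance

theorem stmt_10_general {X : Type*} [NormedAddCommGroup X] {A : Set X}
    (hbd : Bornology.IsBounded A) (hM : MCompact A) : MCompact (closure A) := by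
  intro a ha
  obtain ⟨b, hbA, hab⟩ := exists_seq_mem_tendsto_dist_zero ha.1
  have hb : MaximizingSeq (closure A) b := ha.congr_dist (fun n => subset_closure (hbA n)) hab
  obtain ⟨φ, l, hφ, hbl⟩ := hM b (hb.of_closure hbd hbA)
  exact ⟨φ, l, hφ, (tendsto_iff_of_dist (hab.comp hφ.tendsto_atTop)).2 hbl⟩

theorem stmt_10 {X : Type*} [NormedAddCommGroup X] [NormedSpace ℝ X]
    (A : Set X) (hne : A.Nonempty) (hbd : Bornology.IsBounded A)
    (hM : MCompact A) : MCompact (closure A) :=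
  stmt_10_general hbd hM
end
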